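/- arXiv:nlin/0511007 — 2 statements merged into one kernel-verified Lean document; each statement's English description precedes it below -/
import Mathlib

section
/- The function J2 = p1 + p2 + p3 is a constant of motion for the Hamiltonian H = (1/2)(p1² + p2² + p3²) + b(L1 + L2 + L3) + (1/2)(b² + k)((q2−q1)² + (q3−q2)² + (q1−q3)²), where Li = qj pk − qk pj; that is, the canonical Poisson bracket {H, J2} vanishes identically. -/
open scoped BigOperators

/-- Partial derivative of a function on phase space ℝ⁶ in the i-th coordinate. -/
noncomputable def pd (i : Fin 6) (f : (Fin 6 → ℝ) → ℝ) (x : Fin 6 → ℝ) : ℝ :=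
  fderiv ℝ f x (Pi.single i 1)

/-- Canonical Poisson bracket on ℝ⁶ with coordinates (q1,q2,q3,p1,p2,p3). -/
noncomputable def pb (F G : (Fin 6 → ℝ) → ℝ) (x : Fin 6 → ℝ) : ℝ :=
  (pd 0 F x * pd 3 G x - pd 3 F x * pd 0 G x) +
  (pd 1 F x * pd 4 G x - pd 4 F x * pd 1 G x) +
  (pd 2 F x * pd 5 G x - pd 5 F x * pd 2 G x)

/-- Angular momentum components: L1 = q2 p3 − q3 p2, etc. -/
def L1 (x : Fin 6 → ℝ) : ℝ := x 1 * x 5 - x 2 * x 4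
def L2 (x : Fin 6 → ℝ) : ℝ := x 2 * x 3 - x 0 * x 5
def L3 (x : Fin 6 → ℝ) : ℝ := x 0 * x 4 - x 1 * x 3

/-- The Hamiltonian of the coupled oscillators with magnetic terms. -/
noncomputable def Ham (b k : ℝ) (x : Fin 6 → ℝ) : ℝ :=
  (1/2) * (x 3 ^ 2 + x 4 ^ 2 + x 5 ^ 2) + b * (L1 x + L2 x + L3 x) +
  (1/2) * (b ^ 2 + k) * ((x 1 - x 0) ^ 2 + (x 2 - x 1) ^ 2 + (x 0 - x 2) ^ 2)

/-- J2 = p1 + p2 + p3. -/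
def J2 (x : Fin 6 → ℝ) : ℝ := x 3 + x 4 + x 5

/-- J3 = L1 + L2 + L3. -/
def J3 (x : Fin 6 → ℝ) : ℝ := L1 x + L2 x + L3 x

/-- Coordinates have the projections as derivatives. -/
theorem hasFDerivAt_coord (i : Fin 6) (x : Fin 6 → ℝ) :
    HasFDerivAt (fun y : Fin 6 → ℝ => y i) (ContinuousLinearMap.proj (R := ℝ) (φ := fun _ : Fin 6 => ℝ) i) x :=
  hasFDerivAt_apply i x

/-- J2 = p1+p2+p3 is a constant of motion: {H, J2} = 0 identically. -/
theorem stmt0 (b k : ℝ) (x : Fin 6 → ℝ) : pb (Ham b k) J2 x = 0 := by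
  have c := fun i => hasFDerivAt_coord i x
  have hJ : HasFDerivAt J2 _ x := ((c 3).add (c 4)).add (c 5)
  have h1 : HasFDerivAt L1 _ x := ((c 1).mul (c 5)).sub ((c 2).mul (c 4))
  have h2 : HasFDerivAt L2 _ x := ((c 2).mul (c 3)).sub ((c 0).mul (c 5))
  have h3 : HasFDerivAt L3 _ x := ((c 0).mul (c 4)).sub ((c 1).mul (c 3))
  have hH : HasFDerivAt (Ham b k) _ x :=
    ((((((c 3).pow 2).add ((c 4).pow 2)).add ((c 5).pow 2)).const_mul (1/2)).add
      (((h1.add h2).add h3).const_mul b)).add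
    ((((((c 1).sub (c 0)).pow 2).add (((c 2).sub (c 1)).pow 2)).add
      (((c 0).sub (c 2)).pow 2)).const_mul ((1/2) * (b ^ 2 + k)))
  unfold pb pd
  rw [hJ.fderiv, hH.fderiv]
  simp [Pi.single_apply]
  ring
end

section
/- The function J3 = L1 + L2 + L3 (total angular momentum component sum) is a constant of motion for the Hamiltonian H = (1/2)(p1² + p2² + p3²) + b(L1 + L2 + L3) + (1/2)(b² + k)((q2−q1)² + (q3−q2)² + (q1−q3)²): the Poisson bracket {H, J3} = 0. -/
open scoped BigOperators

/-- The differential of `J3`, evaluated on a vector. -/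
theorem fderiv_J3_apply (x v : Fin 6 → ℝ) :
    fderiv ℝ J3 x v =
      (x 1 * v 5 + v 1 * x 5 - (x 2 * v 4 + v 2 * x 4)) +
      (x 2 * v 3 + v 2 * x 3 - (x 0 * v 5 + v 0 * x 5)) +
      (x 0 * v 4 + v 0 * x 4 - (x 1 * v 3 + v 1 * x 3)) := by
  have c : ∀ i : Fin 6, HasFDerivAt (fun y : Fin 6 → ℝ => y i)
      (ContinuousLinearMap.proj (R := ℝ) (φ := fun _ : Fin 6 => ℝ) i) x :=
    fun i => hasFDerivAt_apply i x
  have h : HasFDerivAt J3 _ x :=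
    ((((c 1).mul (c 5)).sub ((c 2).mul (c 4))).add
      (((c 2).mul (c 3)).sub ((c 0).mul (c 5)))).add
      (((c 0).mul (c 4)).sub ((c 1).mul (c 3)))
  rw [h.fderiv]
  simp
  ring

/-- The differential of the Hamiltonian, evaluated on a vector. -/
theorem fderiv_Ham_apply (b k : ℝ) (x v : Fin 6 → ℝ) :
    fderiv ℝ (Ham b k) x v =
      (x 3 * v 3 + x 4 * v 4 + x 5 * v 5) + b * fderiv ℝ J3 x v +
      (b ^ 2 + k) * ((x 1 - x 0) * (v 1 - v 0) + (x 2 - x 1) * (v 2 - v 1)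
        + (x 0 - x 2) * (v 0 - v 2)) := by
  have c : ∀ i : Fin 6, HasFDerivAt (fun y : Fin 6 → ℝ => y i)
      (ContinuousLinearMap.proj (R := ℝ) (φ := fun _ : Fin 6 => ℝ) i) x :=
    fun i => hasFDerivAt_apply i x
  have hJ : DifferentiableAt ℝ J3 x := by
    unfold J3 L1 L2 L3
    fun_prop
  have h : HasFDerivAt (Ham b k) _ x :=
    ((((((c 3).pow 2).add ((c 4).pow 2)).add ((c 5).pow 2)).const_mul (1/2)).add
      (hJ.hasFDerivAt.const_mul b)).add
      ((((((c 1).sub (c 0)).pow 2).add (((c 2).sub (c 1)).pow 2)).add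
        (((c 0).sub (c 2)).pow 2)).const_mul ((1/2) * (b ^ 2 + k)))
  rw [h.fderiv]
  simp
  ring

/-- J3 = L1+L2+L3 is a constant of motion: {H, J3} = 0 identically. -/
theorem stmt1 (b k : ℝ) (x : Fin 6 → ℝ) : pb (Ham b k) J3 x = 0 := by
  simp only [pb, pd, fderiv_Ham_apply, fderiv_J3_apply]
  simp [Pi.single_apply]
  ring
end
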